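/- Suppose there exist n+1 mutually unbiased orthonormal bases B_a = {v_{a,b}} of ℂ^n and an affine plane of order n. Then there is an orthonormal basis {ψ_f : f ∈ S} of ℂ^n ⊗ ℂ^n indexed by a set S of n² functions f : {0,…,n} → {1,…,n} with the property that for all 0 ≤ a ≤ n, 1 ≤ b ≤ n, and f ∈ S: if ⟨v_{a,b} ⊗ conj(v_{a,b}), ψ_f⟩ ≠ 0 then f(a) = b. (Hence Alice, after observing the outcome f of a von Neumann measurement of the post-measurement state v_{a,b} ⊗ conj(v_{a,b}) in this basis, can answer b = f(a) with certainty once a is revealed.) -/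

import Mathlib

open scoped ComplexInnerProductSpace ComplexConjugate BigOperators

/-- The tensor product `x ⊗ conj x'` of a vector with the componentwise conjugate of
another vector, viewed as a vector of `ℂ^n ⊗ ℂ^n ≅ ℂ^{n²}`. -/
noncomputable def tensConj {n : ℕ} (x x' : EuclideanSpace ℂ (Fin n)) :
    EuclideanSpace ℂ (Fin n × Fin n) :=
  WithLp.toLp 2 fun p => x p.1 * conj (x' p.2)
/-- The state `φ = (1/√n) Σ_b v_b ⊗ conj v_b` built from a basis `v`. -/
noncomputable def meState {n : ℕ} (v : Fin n → EuclideanSpace ℂ (Fin n)) :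
    EuclideanSpace ℂ (Fin n × Fin n) :=
  ((Real.sqrt n : ℂ))⁻¹ • ∑ b : Fin n, tensConj (v b) (v b)

/-- The state `ψ_f = -φ + γ_f` where `φ = (1/√n) Σ_b v_{0,b} ⊗ conj v_{0,b}` and
`γ_f = (1/√n) Σ_a v_{a,f(a)} ⊗ conj v_{a,f(a)}`. -/
noncomputable def psiState {n : ℕ} (v : Fin (n + 1) → Fin n → EuclideanSpace ℂ (Fin n))
    (f : Fin (n + 1) → Fin n) : EuclideanSpace ℂ (Fin n × Fin n) :=
  -meState (v 0) +
    ((Real.sqrt n : ℂ))⁻¹ • ∑ a : Fin (n + 1), tensConj (v a (f a)) (v a (f a))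

/-- An affine plane of order `n`, presented through its `n+1` parallel classes
`L 0, …, L n` of lines on the point set `Fin n × Fin n` (an `(n², n²+n, n+1, n, 1)` design). -/
structure IsAffinePlane (n : ℕ) (L : Fin (n + 1) → Finset (Finset (Fin n × Fin n))) :
    Prop where
  card_class : ∀ i, (L i).card = n
  card_line : ∀ i, ∀ ℓ ∈ L i, ℓ.card = n
  parallel_disjoint : ∀ i, ∀ ℓ ∈ L i, ∀ ℓ' ∈ L i, ℓ ≠ ℓ' → ℓ ∩ ℓ' = ∅
  class_cover : ∀ i, ∀ p : Fin n × Fin n, ∃ ℓ ∈ L i, p ∈ ℓ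
  classes_disjoint : ∀ i j, i ≠ j → ∀ ℓ ∈ L i, ℓ ∉ L j
  unique_line : ∀ p q : Fin n × Fin n, p ≠ q →
    ∃! ℓ : Finset (Fin n × Fin n), (∃ i, ℓ ∈ L i) ∧ p ∈ ℓ ∧ q ∈ ℓ

lemma tens_inner {n : ℕ} (x y : EuclideanSpace ℂ (Fin n)) :
    ⟪tensConj x x, tensConj y y⟫ = ((‖⟪x, y⟫‖ ^ 2 : ℝ) : ℂ) := by
  have h : ((‖⟪x, y⟫‖ ^ 2 : ℝ) : ℂ) = ⟪x, y⟫ * conj ⟪x, y⟫ := by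
    rw [Complex.mul_conj, Complex.normSq_eq_norm_sq]
  rw [h]
  simp only [PiLp.inner_apply, tensConj, RCLike.inner_apply, map_sum, Finset.sum_mul_sum,
    Fintype.sum_prod_type, map_mul, Complex.conj_conj]
  refine Finset.sum_congr rfl fun i _ => Finset.sum_congr rfl fun j _ => ?_
  ring

section
variable {n : ℕ} (hn : 1 ≤ n)
    (v : Fin (n + 1) → Fin n → EuclideanSpace ℂ (Fin n))
    (horth : ∀ a, Orthonormal ℂ (v a))
    (hmub : ∀ a a', a ≠ a' → ∀ b b', ‖⟪v a b, v a' b'⟫‖ ^ 2 = 1 / n)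

include horth hmub in
lemma w_inner (a a' : Fin (n + 1)) (b b' : Fin n) :
    ⟪tensConj (v a b) (v a b), tensConj (v a' b') (v a' b')⟫
      = if a = a' then (if b = b' then 1 else 0) else (n : ℂ)⁻¹ := by
  rw [tens_inner]
  split_ifs with h1 h2
  · subst h1 h2
    simp [(horth a).1 b]
  · subst h1
    simp [(horth a).2 h2]
  · rw [hmub a a' h1]; simp

include hn horth hmub in
lemma w_psi (a : Fin (n + 1)) (b : Fin n) (f : Fin (n + 1) → Fin n) :
    ⟪tensConj (v a b) (v a b), psiState v f⟫
      = ((Real.sqrt n : ℂ))⁻¹ * (if f a = b then 1 else 0) := by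
  have hn0 : (n : ℂ) ≠ 0 := by exact_mod_cast (by omega : n ≠ 0)
  have h1 : ∑ b' : Fin n, ⟪tensConj (v a b) (v a b), tensConj (v 0 b') (v 0 b')⟫ = 1 := by
    simp only [w_inner v horth hmub]
    by_cases h : a = 0
    · simp [h]
    · simp [h, hn0]
  have h2 : ∑ a' : Fin (n + 1), ⟪tensConj (v a b) (v a b), tensConj (v a' (f a')) (v a' (f a'))⟫
      = (if f a = b then 1 else 0) + 1 := by
    simp only [w_inner v horth hmub]
    rw [← Finset.add_sum_erase _ _ (Finset.mem_univ a)]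
    rw [Finset.sum_congr rfl (g := fun _ => (n : ℂ)⁻¹)]
    · simp [hn0, eq_comm]
    · intro x hx
      rw [if_neg (Finset.ne_of_mem_erase hx).symm]
  rw [psiState, meState, inner_add_right, inner_neg_right, inner_smul_right, inner_smul_right,
    inner_sum, inner_sum, h1, h2]
  ring

include hn horth hmub in
lemma psi_psi (g f : Fin (n + 1) → Fin n) :
    ⟪psiState v g, psiState v f⟫
      = (n : ℂ)⁻¹ * (((Finset.univ.filter fun a => f a = g a).card : ℂ) - 1) := by
  have hs : ((Real.sqrt n : ℂ))⁻¹ * ((Real.sqrt n : ℂ))⁻¹ = (n : ℂ)⁻¹ := by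
    rw [← mul_inv, ← Complex.ofReal_mul, Real.mul_self_sqrt (Nat.cast_nonneg n)]
    simp
  conv_lhs => rw [psiState, meState, inner_add_left, inner_neg_left, inner_smul_left,
    inner_smul_left, sum_inner, sum_inner]
  simp only [w_psi hn v horth hmub, ← Finset.mul_sum, map_inv₀, Complex.conj_ofReal]
  rw [← hs]
  simp
  ring
end

lemma plane_fun {n : ℕ} (L : Fin (n + 1) → Finset (Finset (Fin n × Fin n)))
    (hL : IsAffinePlane n L) :
    ∃ F : Fin n × Fin n → Fin (n + 1) → Fin n, ∀ p q, p ≠ q →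
      (Finset.univ.filter fun a => F p a = F q a).card = 1 := by
  choose ℓ hℓ hp using hL.class_cover
  let e := fun a => Finset.equivFinOfCardEq (hL.card_class a)
  refine ⟨fun p a => e a ⟨ℓ a p, hℓ a p⟩, fun p q hpq => ?_⟩
  have key : ∀ a, e a ⟨ℓ a p, hℓ a p⟩ = e a ⟨ℓ a q, hℓ a q⟩ ↔ ℓ a p = ℓ a q := by
    intro a
    rw [(e a).injective.eq_iff, Subtype.mk.injEq]
  simp only [key]
  obtain ⟨m, ⟨⟨i, hi⟩, hmp, hmq⟩, huniq⟩ := hL.unique_line p q hpq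
  have same : ∀ r, r ∈ m → ℓ i r = m := by
    intro r hr
    by_contra hne
    have := hL.parallel_disjoint i _ (hℓ i r) _ hi hne
    have h2 : r ∈ ℓ i r ∩ m := Finset.mem_inter.2 ⟨hp i r, hr⟩
    simp [this] at h2
  rw [Finset.card_eq_one]
  refine ⟨i, ?_⟩
  ext a
  simp only [Finset.mem_filter, Finset.mem_univ, true_and, Finset.mem_singleton]
  constructor
  · intro h
    have hm := huniq (ℓ a p) ⟨⟨a, hℓ a p⟩, hp a p, h ▸ hp a q⟩
    by_contra hne
    exact hL.classes_disjoint a i hne _ (hℓ a p) (hm ▸ hi)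
  · rintro rfl
    rw [same p hmp, same q hmq]

/-- if there exist `n+1` mutually unbiased orthonormal bases of `ℂ^n` and an
affine plane of order `n`, then there is an orthonormal basis `{ψ_f : f ∈ S}` of
`ℂ^n ⊗ ℂ^n`, indexed by a set `S` of `n²` functions `{0,…,n} → {1,…,n}`, such that
`⟨v_{a,b} ⊗ conj v_{a,b}, ψ_f⟩ ≠ 0` implies `f a = b` for all `a`, `b` and `f ∈ S`. -/
theorem exists_onb_psiState_reconstruction
    (n : ℕ) (hn : 1 ≤ n)
    (v : Fin (n + 1) → Fin n → EuclideanSpace ℂ (Fin n))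
    (horth : ∀ a, Orthonormal ℂ (v a))
    (hmub : ∀ a a', a ≠ a' → ∀ b b', ‖⟪v a b, v a' b'⟫‖ ^ 2 = 1 / n)
    (L : Fin (n + 1) → Finset (Finset (Fin n × Fin n)))
    (hL : IsAffinePlane n L) :
    ∃ S : Finset (Fin (n + 1) → Fin n), S.card = n ^ 2 ∧
      (∃ ob : OrthonormalBasis {f // f ∈ S} ℂ (EuclideanSpace ℂ (Fin n × Fin n)),
        ∀ f : {f // f ∈ S}, ob f = psiState v f.1) ∧
      ∀ a : Fin (n + 1), ∀ b : Fin n, ∀ f ∈ S,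
        ⟪tensConj (v a b) (v a b), psiState v f⟫ ≠ 0 → f a = b := by
  obtain ⟨F, hF⟩ := plane_fun L hL
  have hn0 : (n : ℂ) ≠ 0 := by exact_mod_cast (by omega : n ≠ 0)
  have hinj : Function.Injective F := by
    intro p q h
    by_contra hne
    have := hF p q hne
    simp [h] at this
    omega
  have hcard : (Finset.univ.image F).card = n ^ 2 := by
    rw [Finset.card_image_of_injective _ hinj]
    simp [sq]
  refine ⟨Finset.univ.image F, hcard, ?_, ?_⟩
  · have hon : Orthonormal ℂ
        (fun f : {f // f ∈ Finset.univ.image F} => psiState v f.1) := by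
      rw [orthonormal_iff_ite]
      rintro ⟨f, hf⟩ ⟨g, hg⟩
      obtain ⟨p, -, rfl⟩ := Finset.mem_image.1 hf
      obtain ⟨q, -, rfl⟩ := Finset.mem_image.1 hg
      rw [psi_psi hn v horth hmub]
      by_cases h : p = q
      · subst h
        simp [hn0]
      · rw [hF q p (Ne.symm h), if_neg]
        · simp
        · intro h'
          exact h (hinj (Subtype.mk.inj h'))
    have hc : Fintype.card {f // f ∈ Finset.univ.image F}
        = Module.finrank ℂ (EuclideanSpace ℂ (Fin n × Fin n)) := by
      rw [Fintype.card_coe, hcard]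
      simp [sq]
    have hsp := hon.linearIndependent.span_eq_top_of_card_eq_finrank' (by convert hc)
    exact ⟨OrthonormalBasis.mk hon hsp.ge, fun f => by simp⟩
  · intro a b f _ h
    rw [w_psi hn v horth hmub] at h
    by_contra hne
    simp [hne] at h
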